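/- The real number √(2+√2) belongs to F_{√(1+x²)}, but the real number √(1+√2) does not belong to F_{√(1+x²)}. (Hence it is impossible by origami to construct a right triangle with hypotenuse √(2+√2) and one leg equal to 1.) -/

import Mathlib

/-!
For membership, `√(2+√2) = (√2/2) · √(1 + (1+√2)²)`, and `√2 = √(1+1²)`.

For non-membership, let `A` be the field of real algebraic numbers. The elements of `A` that every
embedding `A → ℂ` sends to a real number (the totally real numbers) form a subfield of `ℝ`. It is
closed under `x ↦ √(1+x²)`, since the image of `√(1+x²)` squares to `1 + r²` for a real `r`.
It does not contain `√(1+√2)`: some embedding sends `√2` to its conjugate `-√2`, and then the image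
of `√(1+√2)` squares to `1 - √2 < 0`.
-/

open Polynomial

/-- A complex number is *totally real* if it is algebraic over ℚ and every complex
root of its minimal polynomial over ℚ is a real number. -/
def IsTotallyReal (α : ℂ) : Prop :=
  IsAlgebraic ℚ α ∧ ∀ z : ℂ, aeval z (minpoly ℚ α) = 0 → z.im = 0

/-- Membership in `F_{√(1+x²)}`, the smallest subfield of ℝ closed under
`x ↦ √(1+x²)`. -/
def MemFSqrtOneAddSq (α : ℝ) : Prop :=
  ∀ K : Subfield ℝ, (∀ x ∈ K, Real.sqrt (1 + x ^ 2) ∈ K) → α ∈ K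

/-- Membership in `F_{√x}`, the smallest subfield of ℂ closed under taking
square roots. -/
def MemFSqrt (α : ℂ) : Prop :=
  ∀ L : Subfield ℂ, (∀ z : ℂ, z ^ 2 ∈ L → z ∈ L) → α ∈ L

/-- The field of real algebraic numbers. -/
noncomputable abbrev RealAlg : IntermediateField ℚ ℝ := algebraicClosure ℚ ℝ

/-- The field of totally real numbers inside `ℝ`: the algebraic reals whose image under every
embedding into `ℂ` is real. -/
noncomputable def totallyRealSubfield : Subfield ℝ :=
  (⨅ σ : RealAlg →ₐ[ℚ] ℂ, (Complex.ofRealHom.fieldRange.comap σ.toRingHom)).map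
    (algebraMap RealAlg ℝ)

lemma mem_totallyRealSubfield {x : ℝ} :
    x ∈ totallyRealSubfield ↔
      ∃ a : RealAlg, (a : ℝ) = x ∧ ∀ σ : RealAlg →ₐ[ℚ] ℂ, ∃ r : ℝ, (r : ℂ) = σ a := by
  simp only [totallyRealSubfield, Subfield.mem_map, Subfield.mem_iInf, Subfield.mem_comap,
    RingHom.mem_fieldRange]
  constructor
  · rintro ⟨a, h, rfl⟩
    exact ⟨a, rfl, h⟩
  · rintro ⟨a, rfl, h⟩
    exact ⟨a, h, rfl⟩

lemma exists_ofReal_of_sq_eq {z : ℂ} {r : ℝ} (hr : 0 ≤ r) (h : z ^ 2 = r) :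
    ∃ s : ℝ, (s : ℂ) = z := by
  have h2 : z ^ 2 = ((√r : ℝ) : ℂ) ^ 2 := by
    rw [h, ← Complex.ofReal_pow, Real.sq_sqrt hr]
  rcases sq_eq_sq_iff_eq_or_eq_neg.mp h2 with h3 | h3
  · exact ⟨√r, h3.symm⟩
  · exact ⟨-√r, by rw [h3]; push_cast; rfl⟩

lemma sqrt_mem_totallyRealSubfield (x : ℝ) (hx : x ∈ totallyRealSubfield) :
    √(1 + x ^ 2) ∈ totallyRealSubfield := by
  rw [mem_totallyRealSubfield] at hx ⊢
  obtain ⟨a, rfl, ha⟩ := hx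
  have hsq : √(1 + (a : ℝ) ^ 2) ^ 2 = ((1 + a ^ 2 : RealAlg) : ℝ) := by
    rw [Real.sq_sqrt (by positivity)]; rfl
  have halg : √(1 + (a : ℝ) ^ 2) ∈ RealAlg := by
    rw [mem_algebraicClosure_iff']
    refine IsIntegral.of_pow (n := 2) (by norm_num) ?_
    rw [hsq, ← mem_algebraicClosure_iff']
    exact (1 + a ^ 2 : RealAlg).2
  refine ⟨⟨_, halg⟩, rfl, fun σ => ?_⟩
  obtain ⟨r, hr⟩ := ha σ
  refine exists_ofReal_of_sq_eq (r := 1 + r ^ 2) (by positivity) ?_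
  have : (⟨_, halg⟩ : RealAlg) ^ 2 = 1 + a ^ 2 := Subtype.ext hsq
  rw [← map_pow, this]
  simp [hr]

/-- Every square root of `2` among the real algebraic numbers has an embedding sending it
to `-√2`. -/
lemma exists_embedding_neg {b : RealAlg} (hb : b ^ 2 = 2) :
    ∃ σ : RealAlg →ₐ[ℚ] ℂ, σ b = ((-√2 : ℝ) : ℂ) := by
  have hirr : Irreducible (X ^ 2 - C 2 : ℚ[X]) := by
    refine X_pow_sub_C_irreducible_of_prime Nat.prime_two fun q hq => ?_
    have h : (q : ℝ) ^ 2 = 2 := by exact_mod_cast hq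
    have h' : √2 = ((|q| : ℚ) : ℝ) := by rw [← h, Real.sqrt_sq_eq_abs]; push_cast; rfl
    exact irrational_sqrt_two ⟨|q|, h'.symm⟩
  have hmin : minpoly ℚ b = X ^ 2 - C 2 :=
    (minpoly.eq_of_irreducible_of_monic hirr (by simp [hb])
      (monic_X_pow_sub_C _ (by norm_num))).symm
  have hroot : ((-√2 : ℝ) : ℂ) ∈ (minpoly ℚ b).rootSet ℂ := by
    rw [hmin, mem_rootSet]
    refine ⟨hirr.ne_zero, ?_⟩
    have : ((-√2 : ℝ) : ℂ) ^ 2 = 2 := by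
      rw [← Complex.ofReal_pow, neg_sq, Real.sq_sqrt (by norm_num)]; rfl
    simp only [map_sub, map_pow, aeval_X, this, aeval_C]
    simp
  have : Algebra.IsAlgebraic ℚ RealAlg := algebraicClosure.isAlgebraic ℚ ℝ
  rw [← Algebra.IsAlgebraic.range_eval_eq_rootSet_minpoly (K := RealAlg) ℂ b] at hroot
  exact hroot

lemma sqrt_one_add_sqrt_two_notMem : √(1 + √2) ∉ totallyRealSubfield := by
  rw [mem_totallyRealSubfield]
  rintro ⟨a, ha, h⟩
  -- `a ^ 2 - 1` is `√2`, seen in `RealAlg`.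
  have hb : (a ^ 2 - 1) ^ 2 = 2 := by
    apply Subtype.ext
    change ((a : ℝ) ^ 2 - 1) ^ 2 = 2
    rw [ha, Real.sq_sqrt (by positivity)]
    simp
  obtain ⟨σ, hσ⟩ := exists_embedding_neg hb
  obtain ⟨r, hr⟩ := h σ
  rw [map_sub, map_pow, map_one, ← hr] at hσ
  have h1 : r ^ 2 - 1 = -√2 := by exact_mod_cast hσ
  have h2 : 1 < √2 := Real.lt_sqrt_of_sq_lt (by norm_num)
  nlinarith [sq_nonneg r]

theorem sqrt_two_add_sqrt_two_mem_and_sqrt_one_add_sqrt_two_not_mem :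
    MemFSqrtOneAddSq (Real.sqrt (2 + Real.sqrt 2)) ∧
      ¬ MemFSqrtOneAddSq (Real.sqrt (1 + Real.sqrt 2)) := by
  constructor
  · intro K hK
    have h2 : √2 ∈ K := by
      have := hK 1 K.one_mem
      norm_num at this
      exact this
    have key : √(2 + √2) = √2 / 2 * √(1 + (1 + √2) ^ 2) := by
      have hs : √2 ^ 2 = 2 := Real.sq_sqrt (by norm_num)
      rw [Real.sqrt_eq_iff_mul_self_eq (by positivity) (by positivity), eq_comm]
      have ht : √(1 + (1 + √2) ^ 2) ^ 2 = 1 + (1 + √2) ^ 2 := Real.sq_sqrt (by positivity)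
      calc _ = √2 ^ 2 * √(1 + (1 + √2) ^ 2) ^ 2 / 4 := by ring
        _ = 2 + √2 := by rw [ht, hs]; linear_combination hs / 2
    rw [key]
    exact K.mul_mem (K.div_mem h2 (ofNat_mem K 2)) (hK _ (K.add_mem K.one_mem h2))
  · intro h
    exact sqrt_one_add_sqrt_two_notMem (h _ sqrt_mem_totallyRealSubfield)
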